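/- arXiv:0908.2023 — 7 statements merged into one kernel-verified Lean document; each statement's English description precedes it below -/
import Mathlib

section
/- Let α₁, α₂, α₃ ∈ (0,π) and let c₁ = (cos α₁ + cos α₂·cos α₃)/(sin α₂·sin α₃). Then c₁ > −1 if and only if both triangle inequalities α₁ + α₂ < α₃ + π and α₁ + α₃ < α₂ + π hold (equivalently, if and only if either α₂ ≥ α₃ and α₁ + α₂ < α₃ + π, or α₃ ≥ α₂ and α₁ + α₃ < α₂ + π). -/
open Real

/-- For α₁, α₂, α₃ ∈ (0,π), setting
c₁ = (cos α₁ + cos α₂ cos α₃)/(sin α₂ sin α₃), we have c₁ > -1 if and only if both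
triangle inequalities α₁ + α₂ < α₃ + π and α₁ + α₃ < α₂ + π hold (equivalently, iff
either α₂ ≥ α₃ and α₁ + α₂ < α₃ + π, or α₃ ≥ α₂ and α₁ + α₃ < α₂ + π). -/
theorem sublemma2 (α₁ α₂ α₃ : ℝ)
    (h₁ : α₁ ∈ Set.Ioo 0 π) (h₂ : α₂ ∈ Set.Ioo 0 π) (h₃ : α₃ ∈ Set.Ioo 0 π)
    (c₁ : ℝ) (hc₁ : c₁ = (cos α₁ + cos α₂ * cos α₃) / (sin α₂ * sin α₃)) :
    (c₁ > -1 ↔ (α₁ + α₂ < α₃ + π ∧ α₁ + α₃ < α₂ + π)) ∧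
    (c₁ > -1 ↔ ((α₂ ≥ α₃ ∧ α₁ + α₂ < α₃ + π) ∨ (α₃ ≥ α₂ ∧ α₁ + α₃ < α₂ + π))) := by
  obtain ⟨a1, b1⟩ := h₁
  obtain ⟨a2, b2⟩ := h₂
  obtain ⟨a3, b3⟩ := h₃
  have hs : 0 < sin α₂ * sin α₃ :=
    mul_pos (sin_pos_of_pos_of_lt_pi a2 b2) (sin_pos_of_pos_of_lt_pi a3 b3)
  have hd : |α₂ - α₃| ≤ π := abs_le.2 ⟨by linarith, by linarith⟩
  have key : c₁ > -1 ↔ |α₂ - α₃| < π - α₁ := by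
    rw [← strictAntiOn_cos.lt_iff_gt (a := π - α₁) (b := |α₂ - α₃|)
      ⟨by linarith, by linarith⟩ ⟨abs_nonneg _, hd⟩, cos_abs, cos_pi_sub, cos_sub, hc₁,
      gt_iff_lt, lt_div_iff₀ hs]
    constructor <;> intro h <;> linarith
  have e : c₁ > -1 ↔ (α₁ + α₂ < α₃ + π ∧ α₁ + α₃ < α₂ + π) := by
    rw [key, abs_lt]
    constructor <;> rintro ⟨h, h'⟩ <;> constructor <;> linarith
  refine ⟨e, e.trans ⟨?_, ?_⟩⟩
  · rintro ⟨h, h'⟩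
    rcases le_total α₃ α₂ with g | g
    · exact Or.inl ⟨g, h⟩
    · exact Or.inr ⟨g, h'⟩
  · rintro (⟨g, h⟩ | ⟨g, h⟩) <;> constructor <;> linarith
end

section
/- Let α = (α₁,α₂,α₃) ∈ (0,π)³ with α₂ + α₃ > α₁ + π (a flipped hyperbolic triple, flipped at vertex 1). Then c₁(α) > 1 while c₂(α) < −1 and c₃(α) < −1. -/
open Real

/-- The "cosh of the generalized length" of the edge opposite the first angle of a
Möbius triangle with angles `a`, `b`, `c`. -/
noncomputable def coshLen (a b c : ℝ) : ℝ :=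
  (Real.cos a + Real.cos b * Real.cos c) / (Real.sin b * Real.sin c)

/-- If α = (α₁,α₂,α₃) ∈ (0,π)³ satisfies α₂+α₃ > α₁+π (a flipped
hyperbolic triple, flipped at vertex 1), then c₁(α) > 1 while c₂(α) < -1 and
c₃(α) < -1. -/
theorem flipped_hyperbolic_coshLen (α₁ α₂ α₃ : ℝ)
    (h₁ : α₁ ∈ Set.Ioo 0 π) (h₂ : α₂ ∈ Set.Ioo 0 π) (h₃ : α₃ ∈ Set.Ioo 0 π)
    (hflip : α₂ + α₃ > α₁ + π) :
    coshLen α₁ α₂ α₃ > 1 ∧ coshLen α₂ α₁ α₃ < -1 ∧ coshLen α₃ α₁ α₂ < -1 := by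
  obtain ⟨h1, h1'⟩ := h₁
  obtain ⟨h2, h2'⟩ := h₂
  obtain ⟨h3, h3'⟩ := h₃
  have s1 := Real.sin_pos_of_pos_of_lt_pi h1 h1'
  have s2 := Real.sin_pos_of_pos_of_lt_pi h2 h2'
  have s3 := Real.sin_pos_of_pos_of_lt_pi h3 h3'
  have e1 : Real.cos (α₂ + α₃ - π) < Real.cos α₁ :=
    Real.cos_lt_cos_of_nonneg_of_le_pi h1.le (by linarith) (by linarith)
  have e2 : Real.cos α₂ < Real.cos (π - (α₃ - α₁)) :=
    Real.cos_lt_cos_of_nonneg_of_le_pi (by linarith) (by linarith) (by linarith)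
  have e3 : Real.cos α₃ < Real.cos (π - (α₂ - α₁)) :=
    Real.cos_lt_cos_of_nonneg_of_le_pi (by linarith) (by linarith) (by linarith)
  rw [Real.cos_sub_pi, Real.cos_add] at e1
  rw [Real.cos_pi_sub, Real.cos_sub] at e2 e3
  unfold coshLen
  refine ⟨?_, ?_, ?_⟩
  · rw [gt_iff_lt, lt_div_iff₀ (mul_pos s2 s3)]
    linarith
  · rw [div_lt_iff₀ (mul_pos s1 s3)]
    linarith
  · rw [div_lt_iff₀ (mul_pos s1 s2)]
    linarith
end

section
/- For every triple α = (α₁,α₂,α₃) ∈ (0,π)³, exactly one of the following five conditions holds: (1) α₁+α₂+α₃ > π and αⱼ + αₖ < αᵢ + π for all i (α is spherical); (2) α₁+α₂+α₃ < π (α is hyperbolic); (3) α₁+α₂+α₃ = π (α is Euclidean); (4) there exists i with αⱼ + αₖ > αᵢ + π (α is flipped hyperbolic); (5) there exists i with αⱼ + αₖ = αᵢ + π (α is flipped Euclidean). Moreover in cases (4) and (5) the index i is unique. -/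
open Real

/-- For every α = (α₁,α₂,α₃) ∈ (0,π)³, exactly one of the following five
conditions holds: (1) spherical: α₁+α₂+α₃ > π and each triangle inequality
αⱼ+αₖ < αᵢ+π holds; (2) hyperbolic: α₁+α₂+α₃ < π; (3) Euclidean: α₁+α₂+α₃ = π;
(4) flipped hyperbolic: αⱼ+αₖ > αᵢ+π for some i; (5) flipped Euclidean:
αⱼ+αₖ = αᵢ+π for some i. Moreover in cases (4) and (5) the index i is unique.
Here α : Fin 3 → ℝ and, with S = α 0 + α 1 + α 2, the condition αⱼ+αₖ < αᵢ+π
(for {i,j,k}={1,2,3}) is written S < 2·αᵢ + π, etc. -/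
theorem moebius_triangle_classification (α : Fin 3 → ℝ)
    (hα : ∀ i, α i ∈ Set.Ioo 0 π) :
    (let S := α 0 + α 1 + α 2
     let P₁ : Prop := S > π ∧ ∀ i, S < 2 * α i + π       -- spherical
     let P₂ : Prop := S < π                               -- hyperbolic
     let P₃ : Prop := S = π                               -- Euclidean
     let P₄ : Prop := ∃ i, S > 2 * α i + π                -- flipped hyperbolic
     let P₅ : Prop := ∃ i, S = 2 * α i + π                -- flipped Euclidean
     ((P₁ ∧ ¬P₂ ∧ ¬P₃ ∧ ¬P₄ ∧ ¬P₅) ∨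
      (¬P₁ ∧ P₂ ∧ ¬P₃ ∧ ¬P₄ ∧ ¬P₅) ∨
      (¬P₁ ∧ ¬P₂ ∧ P₃ ∧ ¬P₄ ∧ ¬P₅) ∨
      (¬P₁ ∧ ¬P₂ ∧ ¬P₃ ∧ P₄ ∧ ¬P₅) ∨
      (¬P₁ ∧ ¬P₂ ∧ ¬P₃ ∧ ¬P₄ ∧ P₅)) ∧
     (∀ i j, S > 2 * α i + π → S > 2 * α j + π → i = j) ∧
     (∀ i j, S = 2 * α i + π → S = 2 * α j + π → i = j)) := by
  intro S P₁ P₂ P₃ P₄ P₅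
  have key : ∀ i j, S ≥ 2 * α i + π → S ≥ 2 * α j + π → i = j := by
    have h0 := (hα 0).2
    have h1 := (hα 1).2
    have h2 := (hα 2).2
    intro i j hi hj
    simp only [S] at hi hj
    fin_cases i <;> fin_cases j <;> first | rfl | (exfalso; simp at hi hj; linarith)
  have pos : ∀ i, 0 < α i := fun i => (hα i).1
  refine ⟨?_, fun i j hi hj => key i j hi.le hj.le, fun i j hi hj => key i j hi.ge hj.ge⟩
  have h45 : P₄ → ¬P₅ := by
    rintro ⟨i, hi⟩ ⟨j, hj⟩
    have e := key i j hi.le hj.ge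
    subst e
    linarith
  have big4 : P₄ → S > π := by
    rintro ⟨i, hi⟩
    linarith [pos i]
  have big5 : P₅ → S > π := by
    rintro ⟨i, hi⟩
    linarith [pos i]
  have h1 : P₁ → ¬P₄ ∧ ¬P₅ := by
    rintro ⟨_, h⟩
    exact ⟨fun ⟨i, hi⟩ => by linarith [h i], fun ⟨i, hi⟩ => by linarith [h i]⟩
  have ex : S > π → P₁ ∨ P₄ ∨ P₅ := by
    intro h
    by_cases h4 : P₄
    · exact Or.inr (Or.inl h4)
    by_cases h5 : P₅
    · exact Or.inr (Or.inr h5)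
    refine Or.inl ⟨h, fun i => ?_⟩
    rcases lt_trichotomy S (2 * α i + π) with g | g | g
    · exact g
    · exact absurd ⟨i, g⟩ h5
    · exact absurd ⟨i, g⟩ h4
  have b1 : P₁ → S > π := fun h => h.1
  have n2 : S > π → ¬P₂ := fun h => not_lt.mpr h.le
  have n3 : S > π → ¬P₃ := fun h => h.ne'
  have n23 : P₂ → ¬P₃ := fun h => ne_of_lt h
  have tri : P₂ ∨ P₃ ∨ S > π := lt_trichotomy S π
  rcases tri with h | h | h
  · have hS : ¬ S > π := fun g => n2 g h
    exact Or.inr (Or.inl ⟨fun g => hS (b1 g), h, n23 h, fun g => hS (big4 g),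
      fun g => hS (big5 g)⟩)
  · have hS : ¬ S > π := fun g => n3 g h
    exact Or.inr (Or.inr (Or.inl ⟨fun g => hS (b1 g), fun g => n23 g h, h,
      fun g => hS (big4 g), fun g => hS (big5 g)⟩))
  · rcases ex h with g | g | g
    · exact Or.inl ⟨g, n2 h, n3 h, (h1 g).1, (h1 g).2⟩
    · exact Or.inr (Or.inr (Or.inr (Or.inl
        ⟨fun k => (h1 k).1 g, n2 h, n3 h, g, h45 g⟩)))
    · exact Or.inr (Or.inr (Or.inr (Or.inr
        ⟨fun k => (h1 k).2 g, n2 h, n3 h, fun k => h45 k g, g⟩)))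
end

section
/- Let α = (α₁,α₂,α₃) and β = (β₁,β₂,β₃) be triples in (0,π)³, neither of which is Euclidean or flipped Euclidean; that is, α₁+α₂+α₃ ≠ π and αⱼ + αₖ ≠ αᵢ + π for every i (and similarly for β). If cᵢ(α) = cᵢ(β) for i = 1,2,3, then αᵢ = βᵢ for i = 1,2,3. (The generalized edge lengths determine the angles of a non-Euclidean Möbius triangle.) -/
open Real

theorem disc_ne (a b c : ℝ) (ha : a ∈ Set.Ioo 0 π) (hb : b ∈ Set.Ioo 0 π) (hc : c ∈ Set.Ioo 0 π)
    (hE : a + b + c ≠ π) (h1 : b + c ≠ a + π) (h2 : a + c ≠ b + π) (h3 : a + b ≠ c + π) :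
    (cos a + cos (b + c)) * (cos a + cos (b - c)) ≠ 0 := by
  obtain ⟨ha0, ha1⟩ := ha
  obtain ⟨hb0, hb1⟩ := hb
  obtain ⟨hc0, hc1⟩ := hc
  intro h
  rcases mul_eq_zero.mp h with h | h
  · have e : cos a = cos |π - (b + c)| := by
      rw [cos_abs, cos_pi_sub]; linarith
    have e2 := injOn_cos ⟨ha0.le, ha1.le⟩
      ⟨abs_nonneg _, abs_le.mpr ⟨by linarith, by linarith⟩⟩ e
    rcases abs_cases (π - (b + c)) with ⟨q, _⟩ | ⟨q, _⟩
    · apply hE; linarith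
    · apply h1; linarith
  · have e : cos a = cos (π - |b - c|) := by
      rw [cos_pi_sub, cos_abs]; linarith
    have e1 : |b - c| ≤ π := abs_le.mpr ⟨by linarith, by linarith⟩
    have e2 := injOn_cos ⟨ha0.le, ha1.le⟩
      ⟨by linarith, by linarith [abs_nonneg (b - c)]⟩ e
    rcases abs_cases (b - c) with ⟨q, _⟩ | ⟨q, _⟩
    · apply h3; linarith
    · apply h2; linarith

theorem key (a b c : ℝ) (ha : a ∈ Set.Ioo 0 π) (hb : b ∈ Set.Ioo 0 π) (hc : c ∈ Set.Ioo 0 π)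
    (hE : a + b + c ≠ π) (h1 : b + c ≠ a + π) (h2 : a + c ≠ b + π) (h3 : a + b ≠ c + π) :
    ∃ E p : ℝ, E ≠ 0 ∧ 0 < p ∧
      E ^ 2 = (coshLen b a c ^ 2 - 1) * (coshLen c a b ^ 2 - 1) ∧
      cos a * E = coshLen b a c * coshLen c a b - coshLen a b c ∧
      E * p = coshLen a b c ^ 2 - 1 := by
  have hD := disc_ne a b c ha hb hc hE h1 h2 h3
  have sa := sin_pos_of_pos_of_lt_pi ha.1 ha.2
  have sb := sin_pos_of_pos_of_lt_pi hb.1 hb.2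
  have sc := sin_pos_of_pos_of_lt_pi hc.1 hc.2
  have ta := sin_sq_add_cos_sq a
  have tb := sin_sq_add_cos_sq b
  have tc := sin_sq_add_cos_sq c
  rw [cos_add, cos_sub] at hD
  unfold coshLen
  generalize cos a = x at *
  generalize cos b = y at *
  generalize cos c = z at *
  generalize sin a = u at *
  generalize sin b = v at *
  generalize sin c = w at *
  have hu : u ^ 2 = 1 - x ^ 2 := by linarith
  have hv : v ^ 2 = 1 - y ^ 2 := by linarith
  have hw : w ^ 2 = 1 - z ^ 2 := by linarith
  have q : (x + (y * z - v * w)) * (x + (y * z + v * w))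
      = x ^ 2 + y ^ 2 + z ^ 2 + 2 * x * y * z - 1 := by
    have : (x + (y * z - v * w)) * (x + (y * z + v * w)) = (x + y * z) ^ 2 - v ^ 2 * w ^ 2 := by
      ring
    rw [this, hv, hw]; ring
  rw [q] at hD
  have g1 : ((x + y * z) / (v * w)) ^ 2 - 1
      = (x ^ 2 + y ^ 2 + z ^ 2 + 2 * x * y * z - 1) / (v ^ 2 * w ^ 2) := by
    rw [eq_div_iff (by positivity), sub_mul, div_pow, mul_pow, div_mul_cancel₀ _ (by positivity),
      hv, hw]; ring
  have g2 : ((y + x * z) / (u * w)) ^ 2 - 1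
      = (x ^ 2 + y ^ 2 + z ^ 2 + 2 * x * y * z - 1) / (u ^ 2 * w ^ 2) := by
    rw [eq_div_iff (by positivity), sub_mul, div_pow, mul_pow, div_mul_cancel₀ _ (by positivity),
      hu, hw]; ring
  have g3 : ((z + x * y) / (u * v)) ^ 2 - 1
      = (x ^ 2 + y ^ 2 + z ^ 2 + 2 * x * y * z - 1) / (u ^ 2 * v ^ 2) := by
    rw [eq_div_iff (by positivity), sub_mul, div_pow, mul_pow, div_mul_cancel₀ _ (by positivity),
      hu, hv]; ring
  refine ⟨(x ^ 2 + y ^ 2 + z ^ 2 + 2 * x * y * z - 1) / (u ^ 2 * v * w), u ^ 2 / (v * w),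
    div_ne_zero hD (by positivity), by positivity, ?_, ?_, ?_⟩
  · rw [g2, g3]; field_simp
  · have : (y + x * z) / (u * w) * ((z + x * y) / (u * v)) - (x + y * z) / (v * w)
        = ((y + x * z) * (z + x * y) - (x + y * z) * u ^ 2) / (u ^ 2 * v * w) := by
      field_simp
    rw [this, hu]; ring
  · rw [g1]; field_simp

theorem key2 (a b c a' b' c' : ℝ)
    (ha : a ∈ Set.Ioo 0 π) (hb : b ∈ Set.Ioo 0 π) (hc : c ∈ Set.Ioo 0 π)
    (hE : a + b + c ≠ π) (h1 : b + c ≠ a + π) (h2 : a + c ≠ b + π) (h3 : a + b ≠ c + π)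
    (ha' : a' ∈ Set.Ioo 0 π) (hb' : b' ∈ Set.Ioo 0 π) (hc' : c' ∈ Set.Ioo 0 π)
    (hE' : a' + b' + c' ≠ π) (h1' : b' + c' ≠ a' + π) (h2' : a' + c' ≠ b' + π)
    (h3' : a' + b' ≠ c' + π)
    (k1 : coshLen a b c = coshLen a' b' c') (k2 : coshLen b a c = coshLen b' a' c')
    (k3 : coshLen c a b = coshLen c' a' b') : a = a' := by
  obtain ⟨E, p, e0, p0, q1, q2, q3⟩ := key a b c ha hb hc hE h1 h2 h3
  obtain ⟨F, r, f0, r0, t1, t2, t3⟩ := key a' b' c' ha' hb' hc' hE' h1' h2' h3'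
  rw [k2, k3, ← t1] at q1
  rw [k1, k2, k3, ← t2] at q2
  rw [k1, ← t3] at q3
  have hEF : E = F := by
    rcases sq_eq_sq_iff_eq_or_eq_neg.mp q1 with h | h
    · exact h
    · exfalso
      have : F * (r + p) = 0 := by rw [h] at q3; linarith
      rcases mul_eq_zero.mp this with h | h
      · exact f0 h
      · linarith
  rw [hEF] at q2
  exact injOn_cos ⟨ha.1.le, ha.2.le⟩ ⟨ha'.1.le, ha'.2.le⟩ (mul_right_cancel₀ f0 q2)

theorem coshLen_comm (a b c : ℝ) : coshLen a b c = coshLen a c b := by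
  unfold coshLen; rw [mul_comm (cos b), mul_comm (sin b)]

/-- If α = (α₁,α₂,α₃) and β = (β₁,β₂,β₃) are triples in (0,π)³, neither
Euclidean (sum = π) nor flipped Euclidean (αⱼ+αₖ = αᵢ+π for some i), and the
corresponding generalized edge lengths agree (i.e. cᵢ(α) = cᵢ(β) for i = 1,2,3), then
αᵢ = βᵢ for i = 1,2,3. -/
theorem lengths_determine_angles (α₁ α₂ α₃ β₁ β₂ β₃ : ℝ)
    (hα₁ : α₁ ∈ Set.Ioo 0 π) (hα₂ : α₂ ∈ Set.Ioo 0 π) (hα₃ : α₃ ∈ Set.Ioo 0 π)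
    (hβ₁ : β₁ ∈ Set.Ioo 0 π) (hβ₂ : β₂ ∈ Set.Ioo 0 π) (hβ₃ : β₃ ∈ Set.Ioo 0 π)
    (hαE : α₁ + α₂ + α₃ ≠ π)
    (hαF₁ : α₂ + α₃ ≠ α₁ + π) (hαF₂ : α₁ + α₃ ≠ α₂ + π) (hαF₃ : α₁ + α₂ ≠ α₃ + π)
    (hβE : β₁ + β₂ + β₃ ≠ π)
    (hβF₁ : β₂ + β₃ ≠ β₁ + π) (hβF₂ : β₁ + β₃ ≠ β₂ + π) (hβF₃ : β₁ + β₂ ≠ β₃ + π)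
    (hc₁ : coshLen α₁ α₂ α₃ = coshLen β₁ β₂ β₃)
    (hc₂ : coshLen α₂ α₁ α₃ = coshLen β₂ β₁ β₃)
    (hc₃ : coshLen α₃ α₁ α₂ = coshLen β₃ β₁ β₂) :
    α₁ = β₁ ∧ α₂ = β₂ ∧ α₃ = β₃ := by
  refine ⟨key2 α₁ α₂ α₃ β₁ β₂ β₃ hα₁ hα₂ hα₃ hαE hαF₁ hαF₂ hαF₃ hβ₁ hβ₂ hβ₃ hβE hβF₁ hβF₂ hβF₃
      hc₁ hc₂ hc₃,
    key2 α₂ α₁ α₃ β₂ β₁ β₃ hα₂ hα₁ hα₃ (by rwa [add_comm α₂]) hαF₂ hαF₁ (by rwa [add_comm α₂])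
      hβ₂ hβ₁ hβ₃ (by rwa [add_comm β₂]) hβF₂ hβF₁ (by rwa [add_comm β₂])
      hc₂ hc₁ (by rwa [coshLen_comm α₃, coshLen_comm β₃]),
    key2 α₃ α₁ α₂ β₃ β₁ β₂ hα₃ hα₁ hα₂ (by rwa [add_assoc, add_comm α₃ (α₁ + α₂)]) hαF₃
      (by rwa [add_comm α₃ α₂]) (by rwa [add_comm α₃ α₁])
      hβ₃ hβ₁ hβ₂ (by rwa [add_assoc, add_comm β₃ (β₁ + β₂)]) hβF₃
      (by rwa [add_comm β₃ β₂]) (by rwa [add_comm β₃ β₁])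
      hc₃ (by rwa [coshLen_comm α₁, coshLen_comm β₁])
      (by rwa [coshLen_comm α₂, coshLen_comm β₂])⟩
end

section
/- Consider an angle system on the tetrahedron: six angles α_{ij} = α_{ji} ∈ (0,π) assigned to the edges {i,j} ⊂ {1,2,3,4} such that at each vertex i, with {j,k,l} = {1,2,3,4}\{i}, the triple (α_{ij}, α_{ik}, α_{il}) is spherical. Then for the edge {1,2}: (cos β³₁₂ + cos β¹₂₃ · cos β²₁₃)/(sin β¹₂₃ · sin β²₁₃) = (cos β⁴₁₂ + cos β¹₂₄ · cos β²₁₄)/(sin β¹₂₄ · sin β²₁₄); that is, the cosh-length of an edge computed in either of the two faces containing it is the same. -/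
open Real

/-- `(a,b,c)` are the angles of a spherical triangle: sum > π and triangle inequalities. -/
def IsSphericalTriple (a b c : ℝ) : Prop :=
  a + b + c > π ∧ b + c < a + π ∧ a + c < b + π ∧ a + b < c + π

/-- The face angle formula: cosine and sine of `arccos (coshLen c a b)`. -/
lemma faceAngle_aux (a b c : ℝ) (ha : a ∈ Set.Ioo 0 π) (hb : b ∈ Set.Ioo 0 π)
    (hc : c ∈ Set.Ioo 0 π) (h : IsSphericalTriple a b c) :
    cos (arccos (coshLen c a b)) = (cos c + cos a * cos b) / (sin a * sin b) ∧
    sin (arccos (coshLen c a b)) =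
      √(1 - cos a ^ 2 - cos b ^ 2 - cos c ^ 2 - 2 * cos a * cos b * cos c)
        / (sin a * sin b) := by
  obtain ⟨ha0, ha1⟩ := ha
  obtain ⟨hb0, hb1⟩ := hb
  obtain ⟨hc0, hc1⟩ := hc
  obtain ⟨h0, h1, h2, h3⟩ := h
  have hsa : 0 < sin a := sin_pos_of_pos_of_lt_pi ha0 ha1
  have hsb : 0 < sin b := sin_pos_of_pos_of_lt_pi hb0 hb1
  have hs : 0 < sin a * sin b := mul_pos hsa hsb
  have e1 : cos c + cos (a + b) < 0 := by
    rw [cos_add_cos]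
    have p : cos ((c + (a + b)) / 2) < 0 :=
      cos_neg_of_pi_div_two_lt_of_lt (by linarith) (by linarith)
    have q : 0 < cos ((c - (a + b)) / 2) :=
      cos_pos_of_mem_Ioo ⟨by linarith, by linarith⟩
    nlinarith
  have e2 : 0 < cos c + cos (a - b) := by
    rw [cos_add_cos]
    have p : 0 < cos ((c + (a - b)) / 2) :=
      cos_pos_of_mem_Ioo ⟨by linarith, by linarith⟩
    have q : 0 < cos ((c - (a - b)) / 2) :=
      cos_pos_of_mem_Ioo ⟨by linarith, by linarith⟩
    positivity
  rw [cos_add] at e1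
  rw [cos_sub] at e2
  constructor
  · unfold coshLen
    apply cos_arccos
    · rw [le_div_iff₀ hs]; linarith
    · rw [div_le_iff₀ hs]; linarith
  · rw [sin_arccos]
    unfold coshLen
    rw [← sqrt_sq hs.le, ← sqrt_div' _ (sq_nonneg _), sqrt_sq hs.le]
    congr 1
    have hsa2 : sin a ^ 2 = 1 - cos a ^ 2 := sin_sq a
    have hsb2 : sin b ^ 2 = 1 - cos b ^ 2 := sin_sq b
    rw [div_pow, eq_div_iff (by positivity), sub_mul, div_mul_cancel₀ _ (by positivity),
      mul_pow, hsa2, hsb2]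
    ring

/-- For an angle system (α_{ij}) on the tetrahedron (six angles in (0,π),
with the link triple at each vertex spherical), the cosh-length of the edge {1,2}
computed in the face {1,2,3} agrees with the one computed in the face {1,2,4}.
Here the face angle β^i_{jk} (at vertex i, between the edges to j and k, l being the
fourth vertex) is arccos (coshLen α_{il} α_{ij} α_{ik}), and the cosh-length of the
edge {i,j} in the face {i,j,k} is coshLen β^k_{ij} β^i_{jk} β^j_{ik}. -/
theorem edge_length_well_defined
    (α₁₂ α₁₃ α₁₄ α₂₃ α₂₄ α₃₄ : ℝ)
    (h₁₂ : α₁₂ ∈ Set.Ioo 0 π) (h₁₃ : α₁₃ ∈ Set.Ioo 0 π) (h₁₄ : α₁₄ ∈ Set.Ioo 0 π)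
    (h₂₃ : α₂₃ ∈ Set.Ioo 0 π) (h₂₄ : α₂₄ ∈ Set.Ioo 0 π) (h₃₄ : α₃₄ ∈ Set.Ioo 0 π)
    (hv₁ : IsSphericalTriple α₁₂ α₁₃ α₁₄)
    (hv₂ : IsSphericalTriple α₁₂ α₂₃ α₂₄)
    (hv₃ : IsSphericalTriple α₁₃ α₂₃ α₃₄)
    (hv₄ : IsSphericalTriple α₁₄ α₂₄ α₃₄) :
    let β₁₂₃ := Real.arccos (coshLen α₁₄ α₁₂ α₁₃)  -- face angle at vertex 1 in face {1,2,3}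
    let β₂₁₃ := Real.arccos (coshLen α₂₄ α₁₂ α₂₃)  -- face angle at vertex 2 in face {1,2,3}
    let β₃₁₂ := Real.arccos (coshLen α₃₄ α₁₃ α₂₃)  -- face angle at vertex 3 in face {1,2,3}
    let β₁₂₄ := Real.arccos (coshLen α₁₃ α₁₂ α₁₄)  -- face angle at vertex 1 in face {1,2,4}
    let β₂₁₄ := Real.arccos (coshLen α₂₃ α₁₂ α₂₄)  -- face angle at vertex 2 in face {1,2,4}
    let β₄₁₂ := Real.arccos (coshLen α₃₄ α₁₄ α₂₄)  -- face angle at vertex 4 in face {1,2,4}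
    (cos β₃₁₂ + cos β₁₂₃ * cos β₂₁₃) / (sin β₁₂₃ * sin β₂₁₃) =
      (cos β₄₁₂ + cos β₁₂₄ * cos β₂₁₄) / (sin β₁₂₄ * sin β₂₁₄) := by
  intro β₁₂₃ β₂₁₃ β₃₁₂ β₁₂₄ β₂₁₄ β₄₁₂
  have pos : ∀ x ∈ Set.Ioo 0 π, 0 < sin x := fun x hx => sin_pos_of_pos_of_lt_pi hx.1 hx.2
  have swap : ∀ a b c, IsSphericalTriple a b c → IsSphericalTriple a c b := by
    rintro a b c ⟨h0, h1, h2, h3⟩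
    exact ⟨by linarith, by linarith, by linarith, by linarith⟩
  obtain ⟨c1, s1⟩ := faceAngle_aux _ _ _ h₁₂ h₁₃ h₁₄ hv₁
  obtain ⟨c2, s2⟩ := faceAngle_aux _ _ _ h₁₂ h₂₃ h₂₄ hv₂
  obtain ⟨c3, -⟩ := faceAngle_aux _ _ _ h₁₃ h₂₃ h₃₄ hv₃
  obtain ⟨c4, s4⟩ := faceAngle_aux _ _ _ h₁₂ h₁₄ h₁₃ (swap _ _ _ hv₁)
  obtain ⟨c5, s5⟩ := faceAngle_aux _ _ _ h₁₂ h₂₄ h₂₃ (swap _ _ _ hv₂)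
  obtain ⟨c6, -⟩ := faceAngle_aux _ _ _ h₁₄ h₂₄ h₃₄ hv₄
  have key : ∀ (x y z u v w s t r D E : ℝ), 0 < s → 0 < t → 0 < r → s ^ 2 = 1 - x ^ 2 →
      (w + y * z) / (t * r) + (u + x * y) / (s * t) * ((v + x * z) / (s * r)) =
        (s ^ 2 * w + y * z + u * v + x * (y * v + u * z)) / (s ^ 2 * t * r) ∧
      D / (s * t) * (E / (s * r)) = D * E / (s ^ 2 * t * r) := by
    intro x y z u v w s t r D E hs ht hr h
    constructor
    · have e : s ^ 2 * w + y * z + u * v + x * (y * v + u * z) =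
          s ^ 2 * (w + y * z) + (u + x * y) * (v + x * z) := by rw [h]; ring
      rw [e]
      field_simp
    · field_simp
  have p12 := pos _ h₁₂
  have p13 := pos _ h₁₃
  have p14 := pos _ h₁₄
  have p23 := pos _ h₂₃
  have p24 := pos _ h₂₄
  simp only [β₁₂₃, β₂₁₃, β₃₁₂, β₁₂₄, β₂₁₄, β₄₁₂]
  rw [c1, c2, c3, c4, c5, c6, s1, s2, s4, s5]
  rw [(key _ _ _ _ _ _ _ _ _ 0 0 p12 p13 p23 (sin_sq _)).1,
    (key _ _ _ _ _ _ _ _ _ 0 0 p12 p14 p24 (sin_sq _)).1,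
    (key (cos α₁₂) 0 0 0 0 0 _ _ _ _ _ p12 p13 p23 (sin_sq _)).2,
    (key (cos α₁₂) 0 0 0 0 0 _ _ _ _ _ p12 p14 p24 (sin_sq _)).2,
    div_div_div_cancel_right₀ (by positivity), div_div_div_cancel_right₀ (by positivity)]
  congr 1
  · ring
  · congr 2 <;> ring
end

section
/- Consider an angle system on the tetrahedron: six angles α_{ij} = α_{ji} ∈ (0,π) on the edges {i,j} ⊂ {1,2,3,4} such that at each vertex the link triple is spherical, and for each edge {i,j} let c_{ij} denote the cosh-length of {i,j} computed in a face containing it (independent of the face). Then all six values c_{ij} lie in the same one of the following three classes: all in the open interval (−1,1) (spherical type); all in {−1, 1} (Euclidean type); or all in (−∞,−1) ∪ (1,∞) (hyperbolic type). -/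
open Real

lemma coshLen_mem {d a b : ℝ} (ha : a ∈ Set.Ioo 0 π) (hb : b ∈ Set.Ioo 0 π)
    (hd : d ∈ Set.Ioo 0 π) (h1 : a + b + d > π) (h2 : b + d < a + π) (h3 : a + d < b + π)
    (h4 : a + b < d + π) : -1 < coshLen d a b ∧ coshLen d a b < 1 := by
  obtain ⟨ha0, ha1⟩ := ha
  obtain ⟨hb0, hb1⟩ := hb
  obtain ⟨hd0, hd1⟩ := hd
  have hs : 0 < sin a * sin b :=
    mul_pos (sin_pos_of_pos_of_lt_pi ha0 ha1) (sin_pos_of_pos_of_lt_pi hb0 hb1)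
  have e1 : cos d + cos (a + b) = 2 * cos ((d + (a + b)) / 2) * cos ((d - (a + b)) / 2) :=
    cos_add_cos _ _
  have e2 : cos d + cos (a - b) = 2 * cos ((d + (a - b)) / 2) * cos ((d - (a - b)) / 2) :=
    cos_add_cos _ _
  have p1 : cos ((d + (a + b)) / 2) < 0 :=
    cos_neg_of_pi_div_two_lt_of_lt (by linarith) (by linarith)
  have p2 : 0 < cos ((d - (a + b)) / 2) := cos_pos_of_mem_Ioo ⟨by linarith, by linarith⟩
  have p3 : 0 < cos ((d + (a - b)) / 2) := cos_pos_of_mem_Ioo ⟨by linarith, by linarith⟩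
  have p4 : 0 < cos ((d - (a - b)) / 2) := cos_pos_of_mem_Ioo ⟨by linarith, by linarith⟩
  have q1 := mul_neg_of_neg_of_pos p1 p2
  have q2 := mul_pos p3 p4
  rw [cos_add] at e1
  rw [cos_sub] at e2
  unfold coshLen
  constructor
  · rw [lt_div_iff₀ hs]; linarith
  · rw [div_lt_one hs]; linarith

lemma coshLen_face {x y z : ℝ} (hx : -1 < x ∧ x < 1) (hy : -1 < y ∧ y < 1)
    (hz : -1 < z ∧ z < 1) :
    ∃ p > 0, 1 - coshLen (arccos z) (arccos x) (arccos y) ^ 2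
      = p * (1 - x ^ 2 - y ^ 2 - z ^ 2 - 2 * x * y * z) := by
  have h1 : 0 < 1 - x ^ 2 := by nlinarith
  have h2 : 0 < 1 - y ^ 2 := by nlinarith
  refine ⟨1 / ((1 - x ^ 2) * (1 - y ^ 2)), by positivity, ?_⟩
  unfold coshLen
  rw [cos_arccos hx.1.le hx.2.le, cos_arccos hy.1.le hy.2.le, cos_arccos hz.1.le hz.2.le,
    sin_arccos, sin_arccos, div_pow, mul_pow, sq_sqrt h1.le, sq_sqrt h2.le]
  field_simp
  ring

/-- Determinant of the Gram matrix, in terms of the cosines. -/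
noncomputable def gramD (a b c d e f : ℝ) : ℝ :=
  1 - (a ^ 2 + b ^ 2 + c ^ 2 + d ^ 2 + e ^ 2 + f ^ 2)
    + (a ^ 2 * f ^ 2 + b ^ 2 * e ^ 2 + c ^ 2 * d ^ 2)
    - 2 * (a * b * d + a * c * e + b * c * f + d * e * f)
    - 2 * (a * f * b * e + a * f * c * d + b * e * c * d)

lemma face_gram {a b c d e f : ℝ} (ha : a ∈ Set.Ioo 0 π) (hb : b ∈ Set.Ioo 0 π)
    (hc : c ∈ Set.Ioo 0 π) :
    ∃ p > 0, 1 - coshLen d a b ^ 2 - coshLen e a c ^ 2 - coshLen f b c ^ 2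
      - 2 * coshLen d a b * coshLen e a c * coshLen f b c
      = p * gramD (cos a) (cos b) (cos c) (cos d) (cos e) (cos f) := by
  have A := sin_pos_of_pos_of_lt_pi ha.1 ha.2
  have B := sin_pos_of_pos_of_lt_pi hb.1 hb.2
  have C := sin_pos_of_pos_of_lt_pi hc.1 hc.2
  refine ⟨1 / (sin a ^ 2 * sin b ^ 2 * sin c ^ 2), by positivity, ?_⟩
  have A2 := sin_sq a
  have B2 := sin_sq b
  have C2 := sin_sq c
  unfold coshLen gramD
  field_simp
  rw [A2, B2, C2]
  ring

lemma edge_gram {a b c d e f : ℝ} (ha : a ∈ Set.Ioo 0 π) (hb : b ∈ Set.Ioo 0 π)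
    (hc : c ∈ Set.Ioo 0 π) (hd : d ∈ Set.Ioo 0 π) (he : e ∈ Set.Ioo 0 π) (hf : f ∈ Set.Ioo 0 π)
    (h1 : IsSphericalTriple a b d) (h2 : IsSphericalTriple a c e) (h3 : IsSphericalTriple b c f)
    (D : ℝ) (hD : gramD (cos a) (cos b) (cos c) (cos d) (cos e) (cos f) = D) :
    (∃ p > 0, 1 - coshLen (arccos (coshLen f b c)) (arccos (coshLen d a b))
        (arccos (coshLen e a c)) ^ 2 = p * D) ∧
    (∃ p > 0, 1 - coshLen (arccos (coshLen e a c)) (arccos (coshLen d a b))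
        (arccos (coshLen f b c)) ^ 2 = p * D) ∧
    (∃ p > 0, 1 - coshLen (arccos (coshLen d a b)) (arccos (coshLen e a c))
        (arccos (coshLen f b c)) ^ 2 = p * D) := by
  subst hD
  obtain ⟨p, hp, h⟩ := face_gram (d := d) (e := e) (f := f) ha hb hc
  have x := coshLen_mem ha hb hd h1.1 h1.2.1 h1.2.2.1 h1.2.2.2
  have y := coshLen_mem ha hc he h2.1 h2.2.1 h2.2.2.1 h2.2.2.2
  have z := coshLen_mem hb hc hf h3.1 h3.2.1 h3.2.2.1 h3.2.2.2
  obtain ⟨q, hq, k⟩ := coshLen_face x y z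
  obtain ⟨r, hr, l⟩ := coshLen_face x z y
  obtain ⟨s, hs, m⟩ := coshLen_face y z x
  refine ⟨⟨q * p, mul_pos hq hp, ?_⟩, ⟨r * p, mul_pos hr hp, ?_⟩, ⟨s * p, mul_pos hs hp, ?_⟩⟩
  · rw [k, mul_assoc q p, ← h]
  · rw [l, mul_assoc r p, ← h]; ring
  · rw [m, mul_assoc s p, ← h]; ring

lemma sph_perm {a b c : ℝ} (h : IsSphericalTriple a b c) : IsSphericalTriple a c b :=
  ⟨by linarith [h.1], by linarith [h.2.1], by linarith [h.2.2.2], by linarith [h.2.2.1]⟩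

lemma sph_rot {a b c : ℝ} (h : IsSphericalTriple a b c) : IsSphericalTriple b c a :=
  ⟨by linarith [h.1], by linarith [h.2.2.1], by linarith [h.2.2.2], by linarith [h.2.1]⟩

lemma type_pos {c D : ℝ} (h : ∃ p > 0, 1 - c ^ 2 = p * D) (hD : 0 < D) :
    c ∈ Set.Ioo (-1 : ℝ) 1 := by
  obtain ⟨p, hp, e⟩ := h
  have := mul_pos hp hD
  constructor <;> nlinarith

lemma type_zero {c D : ℝ} (h : ∃ p > 0, 1 - c ^ 2 = p * D) (hD : D = 0) :
    c = -1 ∨ c = 1 := by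
  obtain ⟨p, hp, e⟩ := h
  subst hD
  have : (c + 1) * (c - 1) = 0 := by linarith
  rcases mul_eq_zero.mp this with h | h
  · left; linarith
  · right; linarith

lemma type_neg {c D : ℝ} (h : ∃ p > 0, 1 - c ^ 2 = p * D) (hD : D < 0) :
    c < -1 ∨ 1 < c := by
  obtain ⟨p, hp, e⟩ := h
  have := mul_neg_of_pos_of_neg hp hD
  by_contra! hc
  nlinarith

/-- For an angle system (α_{ij}) on the tetrahedron, all six cosh-lengths
c_{ij} lie in the same class: all in (-1,1) (spherical type), or all in {-1,1}
(Euclidean type), or all in (-∞,-1) ∪ (1,∞) (hyperbolic type).  The face angle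
β^i_{jk} is arccos (coshLen α_{il} α_{ij} α_{ik}) (l the fourth vertex), and the
cosh-length of the edge {i,j} is coshLen β^k_{ij} β^i_{jk} β^j_{ik}, computed in
either face {i,j,k} containing {i,j}. -/
theorem edge_lengths_same_type
    (α₁₂ α₁₃ α₁₄ α₂₃ α₂₄ α₃₄ : ℝ)
    (h₁₂ : α₁₂ ∈ Set.Ioo 0 π) (h₁₃ : α₁₃ ∈ Set.Ioo 0 π) (h₁₄ : α₁₄ ∈ Set.Ioo 0 π)
    (h₂₃ : α₂₃ ∈ Set.Ioo 0 π) (h₂₄ : α₂₄ ∈ Set.Ioo 0 π) (h₃₄ : α₃₄ ∈ Set.Ioo 0 π)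
    (hv₁ : IsSphericalTriple α₁₂ α₁₃ α₁₄)
    (hv₂ : IsSphericalTriple α₁₂ α₂₃ α₂₄)
    (hv₃ : IsSphericalTriple α₁₃ α₂₃ α₃₄)
    (hv₄ : IsSphericalTriple α₁₄ α₂₄ α₃₄) :
    let β₁₂₃ := Real.arccos (coshLen α₁₄ α₁₂ α₁₃)
    let β₂₁₃ := Real.arccos (coshLen α₂₄ α₁₂ α₂₃)
    let β₃₁₂ := Real.arccos (coshLen α₃₄ α₁₃ α₂₃)
    let β₁₂₄ := Real.arccos (coshLen α₁₃ α₁₂ α₁₄)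
    let β₂₁₄ := Real.arccos (coshLen α₂₃ α₁₂ α₂₄)
    let β₄₁₂ := Real.arccos (coshLen α₃₄ α₁₄ α₂₄)
    let β₁₃₄ := Real.arccos (coshLen α₁₂ α₁₃ α₁₄)
    let β₃₁₄ := Real.arccos (coshLen α₂₃ α₁₃ α₃₄)
    let β₄₁₃ := Real.arccos (coshLen α₂₄ α₁₄ α₃₄)
    let c₁₂ := coshLen β₃₁₂ β₁₂₃ β₂₁₃   -- edge {1,2}, computed in face {1,2,3}
    let c₁₃ := coshLen β₂₁₃ β₁₂₃ β₃₁₂   -- edge {1,3}, computed in face {1,2,3}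
    let c₂₃ := coshLen β₁₂₃ β₂₁₃ β₃₁₂   -- edge {2,3}, computed in face {1,2,3}
    let c₁₄ := coshLen β₂₁₄ β₁₂₄ β₄₁₂   -- edge {1,4}, computed in face {1,2,4}
    let c₂₄ := coshLen β₁₂₄ β₂₁₄ β₄₁₂   -- edge {2,4}, computed in face {1,2,4}
    let c₃₄ := coshLen β₁₃₄ β₃₁₄ β₄₁₃   -- edge {3,4}, computed in face {1,3,4}
    let cs : List ℝ := [c₁₂, c₁₃, c₁₄, c₂₃, c₂₄, c₃₄]
    (∀ c ∈ cs, c ∈ Set.Ioo (-1 : ℝ) 1) ∨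
    (∀ c ∈ cs, c = -1 ∨ c = 1) ∨
    (∀ c ∈ cs, c < -1 ∨ 1 < c) := by
  intro β₁₂₃ β₂₁₃ β₃₁₂ β₁₂₄ β₂₁₄ β₄₁₂ β₁₃₄ β₃₁₄ β₄₁₃ c₁₂ c₁₃ c₂₃ c₁₄ c₂₄ c₃₄ cs
  obtain ⟨k₁₂, k₁₃, k₂₃⟩ := edge_gram h₁₂ h₁₃ h₂₃ h₁₄ h₂₄ h₃₄ hv₁ hv₂ hv₃ _ rfl
  obtain ⟨-, k₁₄, k₂₄⟩ := edge_gram h₁₂ h₁₄ h₂₄ h₁₃ h₂₃ h₃₄ (sph_perm hv₁) (sph_perm hv₂) hv₄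
    (gramD (cos α₁₂) (cos α₁₃) (cos α₂₃) (cos α₁₄) (cos α₂₄) (cos α₃₄)) (by unfold gramD; ring)
  obtain ⟨-, -, k₃₄⟩ := edge_gram h₁₃ h₁₄ h₃₄ h₁₂ h₂₃ h₂₄ (sph_rot hv₁)
    (sph_perm hv₃) (sph_perm hv₄)
    (gramD (cos α₁₂) (cos α₁₃) (cos α₂₃) (cos α₁₄) (cos α₂₄) (cos α₃₄)) (by unfold gramD; ring)
  set D := gramD (cos α₁₂) (cos α₁₃) (cos α₂₃) (cos α₁₄) (cos α₂₄) (cos α₃₄)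
  have key : ∀ c ∈ cs, ∃ p > 0, 1 - c ^ 2 = p * D := by
    intro c hc
    simp only [cs, List.mem_cons, List.not_mem_nil, or_false] at hc
    rcases hc with rfl | rfl | rfl | rfl | rfl | rfl
    · exact k₁₂
    · exact k₁₃
    · exact k₁₄
    · exact k₂₃
    · exact k₂₄
    · exact k₃₄
  rcases lt_trichotomy D 0 with hD | hD | hD
  · exact Or.inr (Or.inr fun c hc => type_neg (key c hc) hD)
  · exact Or.inr (Or.inl fun c hc => type_zero (key c hc) hD)
  · exact Or.inl fun c hc => type_pos (key c hc) hD
end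

section
/- Consider an angle system on the tetrahedron: six angles α_{ij} = α_{ji} ∈ (0,π) on the edges {i,j} ⊂ {1,2,3,4} such that at each vertex the link triple is spherical, and let c_{ij} be the cosh-length of edge {i,j}. Then there is a permutation of the vertices {1,2,3,4} after which exactly one of the following holds: (1) spherical: c_{ij} ∈ (−1,1) for all edges; (2) hyperbolic: c_{ij} > 1 for all edges; (3) flipped hyperbolic: c₁₂, c₁₃, c₁₄ < −1 and c₂₃, c₂₄, c₃₄ > 1; (4) doubly flipped hyperbolic: c₁₂, c₃₄ > 1 and c₁₃, c₁₄, c₂₃, c₂₄ < −1; (5) Euclidean: c_{ij} = 1 for all edges; (6) flipped Euclidean: c₁₂ = c₁₃ = c₁₄ = −1 and c₂₃ = c₂₄ = c₃₄ = 1; (7) doubly flipped Euclidean: c₁₂ = c₃₄ = 1 and c₁₃ = c₁₄ = c₂₃ = c₂₄ = −1. -/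
open Real

/-- The face angle β^i_{jk} of the angled tetrahedron with angle system `α`:
the angle at the vertex `i` of the face {i,j,k}, where `l` is the fourth vertex. -/
noncomputable def faceAngle (α : Fin 4 → Fin 4 → ℝ) (i j k l : Fin 4) : ℝ :=
  Real.arccos (coshLen (α i l) (α i j) (α i k))

/-- The cosh-length c^k_{ij} of the edge {i,j} computed in the face {i,j,k};
`l` is the fourth vertex of the tetrahedron. -/
noncomputable def edgeCosh (α : Fin 4 → Fin 4 → ℝ) (i j k l : Fin 4) : ℝ :=
  coshLen (faceAngle α k i j l) (faceAngle α i j k l) (faceAngle α j i k l)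

/-- An angle system on the tetrahedron: symmetric angles in (0,π) on the edges, whose
link triple at each vertex is spherical (angle sum > π and triangle inequalities). -/
structure IsAngleSystem (α : Fin 4 → Fin 4 → ℝ) : Prop where
  symm : ∀ i j, α i j = α j i
  mem_Ioo : ∀ i j, i ≠ j → α i j ∈ Set.Ioo 0 π
  link_sum_gt : ∀ i j k l : Fin 4, i ≠ j → i ≠ k → i ≠ l → j ≠ k → j ≠ l → k ≠ l →
    α i j + α i k + α i l > π
  link_ti : ∀ i j k l : Fin 4, i ≠ j → i ≠ k → i ≠ l → j ≠ k → j ≠ l → k ≠ l →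
    α i j + α i k < α i l + π


lemma link_det_pos {A B C : ℝ} (hA : A ∈ Set.Ioo 0 π) (hB : B ∈ Set.Ioo 0 π)
    (hC : C ∈ Set.Ioo 0 π) (h : A + B + C > π) (h1 : A + B < C + π) (h2 : A + C < B + π)
    (h3 : B + C < A + π) :
    0 < 1 - cos A ^ 2 - cos B ^ 2 - cos C ^ 2 - 2 * cos A * cos B * cos C := by
  obtain ⟨a0, a1⟩ := hA
  obtain ⟨b0, b1⟩ := hB
  obtain ⟨c0, c1⟩ := hC
  have e : 1 - cos A ^ 2 - cos B ^ 2 - cos C ^ 2 - 2 * cos A * cos B * cos C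
      = -((cos C + cos (A + B)) * (cos C + cos (A - B))) := by
    rw [cos_add, cos_sub]
    have := sin_sq_add_cos_sq A
    have := sin_sq_add_cos_sq B
    have hs : sin A ^ 2 * sin B ^ 2 = (1 - cos A ^ 2) * (1 - cos B ^ 2) := by
      rw [sin_sq, sin_sq]
    linear_combination -hs
  have p1 : cos C + cos (A + B) < 0 := by
    rw [cos_add_cos]
    have q1 : cos ((C + (A + B)) / 2) < 0 :=
      cos_neg_of_pi_div_two_lt_of_lt (by linarith) (by linarith)
    have q2 : 0 < cos ((C - (A + B)) / 2) := cos_pos_of_mem_Ioo ⟨by linarith, by linarith⟩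
    nlinarith
  have p2 : 0 < cos C + cos (A - B) := by
    rw [cos_add_cos]
    have q1 : 0 < cos ((C + (A - B)) / 2) := cos_pos_of_mem_Ioo ⟨by linarith, by linarith⟩
    have q2 : 0 < cos ((C - (A - B)) / 2) := cos_pos_of_mem_Ioo ⟨by linarith, by linarith⟩
    positivity
  rw [e]
  nlinarith

/-- The principal minor of the Gram matrix of a link. -/
noncomputable def lk (x y z : ℝ) : ℝ := 1 - x ^ 2 - y ^ 2 - z ^ 2 - 2 * x * y * z

lemma cos_sin_face {A B C : ℝ} (hA : A ∈ Set.Ioo 0 π) (hB : B ∈ Set.Ioo 0 π)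
    (hD : 0 < lk (cos A) (cos B) (cos C)) :
    cos (arccos (coshLen C A B)) = (cos C + cos A * cos B) / (sin A * sin B) ∧
    sin (arccos (coshLen C A B)) = √(lk (cos A) (cos B) (cos C)) / (sin A * sin B) := by
  have sA := sin_pos_of_pos_of_lt_pi hA.1 hA.2
  have sB := sin_pos_of_pos_of_lt_pi hB.1 hB.2
  have hs : (sin A * sin B) ^ 2 = (1 - cos A ^ 2) * (1 - cos B ^ 2) := by
    rw [mul_pow, sin_sq, sin_sq]
  have e : 1 - coshLen C A B ^ 2 = lk (cos A) (cos B) (cos C) / (sin A * sin B) ^ 2 := by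
    unfold coshLen lk
    rw [eq_div_iff (by positivity), sub_mul, div_pow, div_mul_cancel₀ _ (by positivity), hs]
    ring
  have hp : 0 < 1 - coshLen C A B ^ 2 := by rw [e]; positivity
  constructor
  · rw [cos_arccos (by nlinarith) (by nlinarith)]; rfl
  · rw [sin_arccos, e, sqrt_div hD.le, sqrt_sq (by positivity)]

/-- The cofactor of the Gram matrix attached to the edge `ij`. -/
noncomputable def cof (ij ik il jk jl kl : ℝ) : ℝ :=
  kl * (1 - ij ^ 2) + ik * jk + il * jl + ij * (ik * jl + il * jk)

lemma link_pos {α : Fin 4 → Fin 4 → ℝ} (h : IsAngleSystem α) (i j k l : Fin 4)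
    (hij : i ≠ j) (hik : i ≠ k) (hil : i ≠ l) (hjk : j ≠ k) (hjl : j ≠ l) (hkl : k ≠ l) :
    0 < lk (cos (α i j)) (cos (α i k)) (cos (α i l)) :=
  link_det_pos (h.mem_Ioo _ _ hij) (h.mem_Ioo _ _ hik) (h.mem_Ioo _ _ hil)
    (h.link_sum_gt i j k l hij hik hil hjk hjl hkl)
    (h.link_ti i j k l hij hik hil hjk hjl hkl)
    (h.link_ti i j l k hij hil hik hjl hjk hkl.symm)
    (h.link_ti i k l j hik hil hij hkl hjk.symm hjl.symm)

lemma edge_formula {α : Fin 4 → Fin 4 → ℝ} (h : IsAngleSystem α) (i j k l : Fin 4)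
    (hij : i ≠ j) (hik : i ≠ k) (hil : i ≠ l) (hjk : j ≠ k) (hjl : j ≠ l) (hkl : k ≠ l) :
    edgeCosh α i j k l =
      cof (cos (α i j)) (cos (α i k)) (cos (α i l)) (cos (α j k)) (cos (α j l)) (cos (α k l)) /
      (√(lk (cos (α i j)) (cos (α i k)) (cos (α i l))) *
        √(lk (cos (α i j)) (cos (α j k)) (cos (α j l)))) := by
  have di := link_pos h i j k l hij hik hil hjk hjl hkl
  have dj := link_pos h j i k l hij.symm hjk hjl hik hil hkl
  have dk := link_pos h k i j l hik.symm hjk.symm hkl hij hil hjl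
  have mij := h.mem_Ioo _ _ hij
  have mik := h.mem_Ioo _ _ hik
  have mjk := h.mem_Ioo _ _ hjk
  have sij := sin_pos_of_pos_of_lt_pi mij.1 mij.2
  have sik := sin_pos_of_pos_of_lt_pi mik.1 mik.2
  have sjk := sin_pos_of_pos_of_lt_pi mjk.1 mjk.2
  rw [h.symm j i] at dj
  rw [h.symm k i, h.symm k j] at dk
  obtain ⟨ci, si⟩ := cos_sin_face mij mik di
  obtain ⟨cj, sj⟩ := cos_sin_face mij mjk dj
  obtain ⟨ck, -⟩ := cos_sin_face mik mjk dk
  unfold edgeCosh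
  rw [coshLen.eq_def (faceAngle α k i j l)]
  unfold faceAngle
  rw [h.symm k i, h.symm k j, h.symm j i, ci, si, cj, sj, ck]
  have hi := sqrt_pos.2 di
  have hj := sqrt_pos.2 dj
  have hs : sin (α i j) ^ 2 = 1 - cos (α i j) ^ 2 := sin_sq _
  field_simp
  rw [hs]
  unfold cof
  ring

/-- The determinant of the Gram matrix. -/
noncomputable def gdet (a b c d e f : ℝ) : ℝ :=
  1 - a ^ 2 - b ^ 2 - c ^ 2 - d ^ 2 - e ^ 2 - f ^ 2
    - 2 * (a * b * c + a * d * e + b * d * f + c * e * f)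
    + a ^ 2 * f ^ 2 + b ^ 2 * e ^ 2 + c ^ 2 * d ^ 2
    - 2 * (a * b * e * f + a * c * d * f + b * c * d * e)

lemma jacobi2 (a b c d e f : ℝ) :
    lk a b c * lk a d e - cof a b c d e f ^ 2 = gdet a b c d e f * (1 - a ^ 2) := by
  unfold lk cof gdet; ring

lemma jacobi3 (a b c d e f : ℝ) :
    lk a b c * lk a d e * lk b d f
      + 2 * cof a b c d e f * cof b a c d f e * cof d a e b f c
      - lk a b c * cof d a e b f c ^ 2 - lk a d e * cof b a c d f e ^ 2
      - lk b d f * cof a b c d e f ^ 2 = gdet a b c d e f ^ 2 := by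
  unfold lk cof gdet; ring

lemma edge_sq {a b c d e f u : ℝ} (h1 : 0 < lk a b c) (h2 : 0 < lk a d e)
    (hu : u = cof a b c d e f / (√(lk a b c) * √(lk a d e))) :
    (1 - u ^ 2) * (lk a b c * lk a d e) = gdet a b c d e f * (1 - a ^ 2) := by
  rw [← jacobi2, hu, div_pow, mul_pow, sq_sqrt h1.le, sq_sqrt h2.le]
  field_simp

lemma tri_nonneg {a b c d e f u v w : ℝ} (h1 : 0 < lk a b c) (h2 : 0 < lk a d e)
    (h3 : 0 < lk b d f)
    (hu : u = cof a b c d e f / (√(lk a b c) * √(lk a d e)))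
    (hv : v = cof b a c d f e / (√(lk a b c) * √(lk b d f)))
    (hw : w = cof d a e b f c / (√(lk a d e) * √(lk b d f))) :
    u ^ 2 + v ^ 2 + w ^ 2 ≤ 1 + 2 * u * v * w := by
  have j := jacobi3 a b c d e f
  have q1 := sqrt_pos.2 h1
  have q2 := sqrt_pos.2 h2
  have q3 := sqrt_pos.2 h3
  have e1 : cof a b c d e f = u * (√(lk a b c) * √(lk a d e)) := by rw [hu]; field_simp
  have e2 : cof b a c d f e = v * (√(lk a b c) * √(lk b d f)) := by rw [hv]; field_simp
  have e3 : cof d a e b f c = w * (√(lk a d e) * √(lk b d f)) := by rw [hw]; field_simp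
  rw [e1, e2, e3] at j
  have s1 := sq_sqrt h1.le
  have s2 := sq_sqrt h2.le
  have s3 := sq_sqrt h3.le
  generalize √(lk a b c) = x at *
  generalize √(lk a d e) = y at *
  generalize √(lk b d f) = z at *
  rw [← s1, ← s2, ← s3] at j
  have k : (1 + 2 * u * v * w - u ^ 2 - v ^ 2 - w ^ 2) * (x * y * z) ^ 2
      = gdet a b c d e f ^ 2 := by rw [← j]; ring
  have p : 0 < (x * y * z) ^ 2 := by positivity
  have : 0 ≤ (1 + 2 * u * v * w - u ^ 2 - v ^ 2 - w ^ 2) := by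
    by_contra hn
    push Not at hn
    nlinarith [mul_neg_of_neg_of_pos hn p, sq_nonneg (gdet a b c d e f)]
  linarith

lemma lk_swap12 (x y z : ℝ) : lk y x z = lk x y z := by unfold lk; ring

lemma lk_swap23 (x y z : ℝ) : lk x z y = lk x y z := by unfold lk; ring

lemma lk_rot (x y z : ℝ) : lk y z x = lk x y z := by unfold lk; ring

section
variable {α : Fin 4 → Fin 4 → ℝ} {c : Fin 4 → Fin 4 → ℝ}

lemma c_symm (hα : IsAngleSystem α)
    (hc : ∀ i j k l : Fin 4, i ≠ j → i ≠ k → i ≠ l → j ≠ k → j ≠ l → k ≠ l →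
      c i j = edgeCosh α i j k l) (i j k l : Fin 4)
    (hij : i ≠ j) (hik : i ≠ k) (hil : i ≠ l) (hjk : j ≠ k) (hjl : j ≠ l) (hkl : k ≠ l) :
    c j i = c i j := by
  rw [hc i j k l hij hik hil hjk hjl hkl, hc j i k l hij.symm hjk hjl hik hil hkl,
    edge_formula hα i j k l hij hik hil hjk hjl hkl,
    edge_formula hα j i k l hij.symm hjk hjl hik hil hkl, hα.symm j i]
  rw [mul_comm (√_)]
  congr 1
  unfold cof; ring

lemma c_sq (hα : IsAngleSystem α)
    (hc : ∀ i j k l : Fin 4, i ≠ j → i ≠ k → i ≠ l → j ≠ k → j ≠ l → k ≠ l →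
      c i j = edgeCosh α i j k l) (i j k l : Fin 4)
    (hij : i ≠ j) (hik : i ≠ k) (hil : i ≠ l) (hjk : j ≠ k) (hjl : j ≠ l) (hkl : k ≠ l) :
    ∃ p > 0, 1 - c i j ^ 2 = p * gdet (cos (α i j)) (cos (α i k)) (cos (α i l))
      (cos (α j k)) (cos (α j l)) (cos (α k l)) := by
  have di := link_pos hα i j k l hij hik hil hjk hjl hkl
  have dj := link_pos hα j i k l hij.symm hjk hjl hik hil hkl
  rw [hα.symm j i] at dj
  have h := edge_sq di dj ((hc i j k l hij hik hil hjk hjl hkl).trans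
    (edge_formula hα i j k l hij hik hil hjk hjl hkl))
  have mij := hα.mem_Ioo _ _ hij
  have s := pow_pos (sin_pos_of_pos_of_lt_pi mij.1 mij.2) 2
  rw [← sin_sq] at h
  refine ⟨_, div_pos s (mul_pos di dj), ?_⟩
  field_simp
  linarith

lemma c_tri (hα : IsAngleSystem α)
    (hc : ∀ i j k l : Fin 4, i ≠ j → i ≠ k → i ≠ l → j ≠ k → j ≠ l → k ≠ l →
      c i j = edgeCosh α i j k l) (i j k l : Fin 4)
    (hij : i ≠ j) (hik : i ≠ k) (hil : i ≠ l) (hjk : j ≠ k) (hjl : j ≠ l) (hkl : k ≠ l) :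
    c i j ^ 2 + c i k ^ 2 + c j k ^ 2 ≤ 1 + 2 * c i j * c i k * c j k := by
  have di := link_pos hα i j k l hij hik hil hjk hjl hkl
  have dj := link_pos hα j i k l hij.symm hjk hjl hik hil hkl
  have dk := link_pos hα k i j l hik.symm hjk.symm hkl hij hil hjl
  have h1 := (hc i j k l hij hik hil hjk hjl hkl).trans
    (edge_formula hα i j k l hij hik hil hjk hjl hkl)
  have h2 := (hc i k j l hik hij hil hjk.symm hkl hjl).trans
    (edge_formula hα i k j l hik hij hil hjk.symm hkl hjl)
  have h3 := (hc j k i l hjk hij.symm hjl hik.symm hkl hil).trans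
    (edge_formula hα j k i l hjk hij.symm hjl hik.symm hkl hil)
  rw [hα.symm j i] at dj
  rw [hα.symm k i, hα.symm k j] at dk
  rw [hα.symm k j, lk_swap12 (cos (α i j))] at h2
  rw [hα.symm j i, hα.symm k i, lk_swap12 (cos (α i j)), lk_swap12 (cos (α i k))] at h3
  exact tri_nonneg di dj dk h1 h2 h3

lemma tri_pos {u v w : ℝ} (h : u ^ 2 + v ^ 2 + w ^ 2 ≤ 1 + 2 * u * v * w)
    (hu : 1 ≤ u ^ 2) (hv : 1 ≤ v ^ 2) (hw : 1 ≤ w ^ 2) : 0 < u * v * w := by linarith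

/-- Sign patterns of the edges when every face has a positive product. -/
lemma sign_pattern (hs : ∀ i j, i ≠ j → c i j = c j i)
    (hp : ∀ i j k, i ≠ j → i ≠ k → j ≠ k → 0 < c i j * c i k * c j k) :
    ∃ σ : Equiv.Perm (Fin 4),
      (∀ i j, i ≠ j → 0 < c (σ i) (σ j)) ∨
      (c (σ 0) (σ 1) < 0 ∧ c (σ 0) (σ 2) < 0 ∧ c (σ 0) (σ 3) < 0 ∧
        0 < c (σ 1) (σ 2) ∧ 0 < c (σ 1) (σ 3) ∧ 0 < c (σ 2) (σ 3)) ∨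
      (0 < c (σ 0) (σ 1) ∧ 0 < c (σ 2) (σ 3) ∧ c (σ 0) (σ 2) < 0 ∧ c (σ 0) (σ 3) < 0 ∧
        c (σ 1) (σ 2) < 0 ∧ c (σ 1) (σ 3) < 0) := by
  have t1 := hp 0 1 2 (by decide) (by decide) (by decide)
  have t2 := hp 0 1 3 (by decide) (by decide) (by decide)
  have t3 := hp 0 2 3 (by decide) (by decide) (by decide)
  have s10 := hs 1 0 (by decide)
  have s20 := hs 2 0 (by decide)
  have s30 := hs 3 0 (by decide)
  have s21 := hs 2 1 (by decide)
  have s31 := hs 3 1 (by decide)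
  have s32 := hs 3 2 (by decide)
  have key : ∀ {u v w : ℝ}, 0 < u * v * w → (0 < u ∧ 0 < v ∧ 0 < w) ∨ (0 < u ∧ v < 0 ∧ w < 0) ∨
      (u < 0 ∧ 0 < v ∧ w < 0) ∨ (u < 0 ∧ v < 0 ∧ 0 < w) := by
    intro u v w h
    rcases pos_and_pos_or_neg_and_neg_of_mul_pos h with ⟨h, hw⟩ | ⟨h, hw⟩
    · rcases pos_and_pos_or_neg_and_neg_of_mul_pos h with ⟨hu, hv⟩ | ⟨hu, hv⟩ <;> tauto
    · rcases mul_neg_iff.1 h with ⟨hu, hv⟩ | ⟨hu, hv⟩ <;> tauto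
  have k1 := key t1
  have k2 := key t2
  have k3 := key t3
  have e13 : Equiv.swap (1 : Fin 4) 3 2 = 2 := by decide
  have e12 : Equiv.swap (1 : Fin 4) 2 3 = 3 := by decide
  have e012 : Equiv.swap (0 : Fin 4) 1 2 = 2 := by decide
  have e013 : Equiv.swap (0 : Fin 4) 1 3 = 3 := by decide
  have e021 : Equiv.swap (0 : Fin 4) 2 1 = 1 := by decide
  have e023 : Equiv.swap (0 : Fin 4) 2 3 = 3 := by decide
  have e031 : Equiv.swap (0 : Fin 4) 3 1 = 1 := by decide
  have e032 : Equiv.swap (0 : Fin 4) 3 2 = 2 := by decide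
  have e130 : Equiv.swap (1 : Fin 4) 3 0 = 0 := by decide
  have e120 : Equiv.swap (1 : Fin 4) 2 0 = 0 := by decide
  have nz : c 0 1 < 0 ∨ 0 < c 0 1 := by rcases k1 with h | h | h | h <;> first | exact Or.inl h.1 | exact Or.inr h.1
  have nz2 : c 0 2 < 0 ∨ 0 < c 0 2 := by rcases k3 with h | h | h | h <;> first | exact Or.inl h.1 | exact Or.inr h.1
  have nz3 : c 0 3 < 0 ∨ 0 < c 0 3 := by rcases k3 with h | h | h | h <;> first | exact Or.inl h.2.1 | exact Or.inr h.2.1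
  rcases nz with a | a <;> rcases nz2 with b | b <;> rcases nz3 with d | d <;>
    simp only [a, b, d, a.not_gt, b.not_gt, d.not_gt, true_and, false_and, or_false, false_or]
      at k1 k2 k3
  · exact ⟨1, Or.inr (Or.inl (by simp [a, b, d, k1, k2, k3]))⟩
  · exact ⟨Equiv.swap 1 3, Or.inr (Or.inr (by simp [e13, e130, s10, s20, s30, s21, s31, s32, a, b, d, k1, k2, k3]))⟩
  · exact ⟨Equiv.swap 1 2, Or.inr (Or.inr (by simp [e12, e120, s10, s20, s30, s21, s31, s32, a, b, d, k1, k2, k3]))⟩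
  · exact ⟨Equiv.swap 0 1, Or.inr (Or.inl (by simp [e012, e013, s10, s20, s30, s21, s31, s32, a, b, d, k1, k2, k3]))⟩
  · exact ⟨1, Or.inr (Or.inr (by simp [a, b, d, k1, k2, k3]))⟩
  · exact ⟨Equiv.swap 0 2, Or.inr (Or.inl (by simp [e021, e023, s10, s20, s30, s21, s31, s32, a, b, d, k1, k2, k3]))⟩
  · exact ⟨Equiv.swap 0 3, Or.inr (Or.inl (by simp [e031, e032, s10, s20, s30, s21, s31, s32, a, b, d, k1, k2, k3]))⟩
  · refine ⟨1, Or.inl ?_⟩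
    intro i j hij
    simp only [Equiv.Perm.coe_one, id]
    fin_cases i <;> fin_cases j <;>
      first
      | exact absurd rfl hij
      | simp [s10, s20, s30, s21, s31, s32, a, b, d, k1, k2, k3]

end

/-- For an angle system on the tetrahedron with cosh-lengths c_{ij}
(well defined, i.e. independent of the face used to compute them), there is a
permutation of the vertices after which exactly one of the seven cases holds:
spherical, hyperbolic, flipped hyperbolic, doubly flipped hyperbolic, Euclidean,
flipped Euclidean, doubly flipped Euclidean. -/
theorem simplex_classification (α : Fin 4 → Fin 4 → ℝ) (hα : IsAngleSystem α)
    (c : Fin 4 → Fin 4 → ℝ)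
    (hc : ∀ i j k l : Fin 4, i ≠ j → i ≠ k → i ≠ l → j ≠ k → j ≠ l → k ≠ l →
      c i j = edgeCosh α i j k l) :
    ∃ σ : Equiv.Perm (Fin 4),
      let d : Fin 4 → Fin 4 → ℝ := fun i j => c (σ i) (σ j)
      -- (1) spherical
      (∀ i j, i ≠ j → d i j ∈ Set.Ioo (-1 : ℝ) 1) ∨
      -- (2) hyperbolic
      (∀ i j, i ≠ j → 1 < d i j) ∨
      -- (3) flipped hyperbolic (flipped at the first vertex)
      (d 0 1 < -1 ∧ d 0 2 < -1 ∧ d 0 3 < -1 ∧ 1 < d 1 2 ∧ 1 < d 1 3 ∧ 1 < d 2 3) ∨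
      -- (4) doubly flipped hyperbolic
      (1 < d 0 1 ∧ 1 < d 2 3 ∧ d 0 2 < -1 ∧ d 0 3 < -1 ∧ d 1 2 < -1 ∧ d 1 3 < -1) ∨
      -- (5) Euclidean
      (∀ i j, i ≠ j → d i j = 1) ∨
      -- (6) flipped Euclidean
      (d 0 1 = -1 ∧ d 0 2 = -1 ∧ d 0 3 = -1 ∧ d 1 2 = 1 ∧ d 1 3 = 1 ∧ d 2 3 = 1) ∨
      -- (7) doubly flipped Euclidean
      (d 0 1 = 1 ∧ d 2 3 = 1 ∧ d 0 2 = -1 ∧ d 0 3 = -1 ∧ d 1 2 = -1 ∧ d 1 3 = -1) := by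
  have ex4 : ∀ i j k : Fin 4, i ≠ j → i ≠ k → j ≠ k → ∃ l, i ≠ l ∧ j ≠ l ∧ k ≠ l := by decide
  have ex3 : ∀ i j : Fin 4, i ≠ j → ∃ k, i ≠ k ∧ j ≠ k := by decide
  have hs : ∀ i j, i ≠ j → c i j = c j i := by
    intro i j hij
    obtain ⟨k, hik, hjk⟩ := ex3 i j hij
    obtain ⟨l, hil, hjl, hkl⟩ := ex4 i j k hij hik hjk
    exact (c_symm hα hc i j k l hij hik hil hjk hjl hkl).symm
  have ht : ∀ i j k, i ≠ j → i ≠ k → j ≠ k →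
      c i j ^ 2 + c i k ^ 2 + c j k ^ 2 ≤ 1 + 2 * c i j * c i k * c j k := by
    intro i j k hij hik hjk
    obtain ⟨l, hil, hjl, hkl⟩ := ex4 i j k hij hik hjk
    exact c_tri hα hc i j k l hij hik hil hjk hjl hkl
  obtain ⟨Δ, hΔ⟩ : ∃ Δ : ℝ, ∀ i j, i ≠ j → ∃ p > 0, 1 - c i j ^ 2 = p * Δ := by
    refine ⟨gdet (cos (α 0 1)) (cos (α 0 2)) (cos (α 0 3))
      (cos (α 1 2)) (cos (α 1 3)) (cos (α 2 3)), ?_⟩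
    have hlt : ∀ i j : Fin 4, i < j → ∃ p > 0, 1 - c i j ^ 2 = p *
        gdet (cos (α 0 1)) (cos (α 0 2)) (cos (α 0 3))
        (cos (α 1 2)) (cos (α 1 3)) (cos (α 2 3)) := by
      have h01 := c_sq hα hc 0 1 2 3 (by decide) (by decide) (by decide) (by decide) (by decide)
        (by decide)
      have h02 := c_sq hα hc 0 2 1 3 (by decide) (by decide) (by decide) (by decide) (by decide)
        (by decide)
      have h03 := c_sq hα hc 0 3 1 2 (by decide) (by decide) (by decide) (by decide) (by decide)
        (by decide)
      have h12 := c_sq hα hc 1 2 0 3 (by decide) (by decide) (by decide) (by decide) (by decide)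
        (by decide)
      have h13 := c_sq hα hc 1 3 0 2 (by decide) (by decide) (by decide) (by decide) (by decide)
        (by decide)
      have h23 := c_sq hα hc 2 3 0 1 (by decide) (by decide) (by decide) (by decide) (by decide)
        (by decide)
      simp only [hα.symm 1 0, hα.symm 2 0, hα.symm 3 0, hα.symm 2 1, hα.symm 3 1, hα.symm 3 2]
        at h01 h02 h03 h12 h13 h23
      generalize cos (α 0 1) = x1 at *
      generalize cos (α 0 2) = x2 at *
      generalize cos (α 0 3) = x3 at *
      generalize cos (α 1 2) = x4 at *
      generalize cos (α 1 3) = x5 at *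
      generalize cos (α 2 3) = x6 at *
      rw [show gdet x2 x1 x3 x4 x6 x5 = gdet x1 x2 x3 x4 x5 x6 by unfold gdet; ring] at h02
      rw [show gdet x3 x1 x2 x5 x6 x4 = gdet x1 x2 x3 x4 x5 x6 by unfold gdet; ring] at h03
      rw [show gdet x4 x1 x5 x2 x6 x3 = gdet x1 x2 x3 x4 x5 x6 by unfold gdet; ring] at h12
      rw [show gdet x5 x1 x4 x3 x6 x2 = gdet x1 x2 x3 x4 x5 x6 by unfold gdet; ring] at h13
      rw [show gdet x6 x2 x4 x3 x5 x1 = gdet x1 x2 x3 x4 x5 x6 by unfold gdet; ring] at h23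
      intro i j hij
      fin_cases i <;> fin_cases j <;> first | (exact absurd hij (by decide)) | assumption
    intro i j hij
    rcases lt_or_gt_of_ne hij with h | h
    · exact hlt i j h
    · rw [hs i j hij]
      exact hlt j i h
  rcases lt_trichotomy Δ 0 with hneg | hzero | hpos
  · have hc1 : ∀ i j, i ≠ j → 1 < c i j ^ 2 := by
      intro i j hij
      obtain ⟨p, hp, e⟩ := hΔ i j hij
      nlinarith [mul_neg_of_pos_of_neg hp hneg]
    have up : ∀ i j, i ≠ j → 0 < c i j → 1 < c i j := by
      intro i j hij h
      nlinarith [hc1 i j hij]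
    have dn : ∀ i j, i ≠ j → c i j < 0 → c i j < -1 := by
      intro i j hij h
      nlinarith [hc1 i j hij]
    obtain ⟨σ, h⟩ := sign_pattern hs (fun i j k hij hik hjk =>
      tri_pos (ht i j k hij hik hjk) (hc1 _ _ hij).le (hc1 _ _ hik).le (hc1 _ _ hjk).le)
    have ne : ∀ i j : Fin 4, i ≠ j → σ i ≠ σ j := fun i j h => σ.injective.ne h
    have n01 := ne 0 1 (by decide)
    have n02 := ne 0 2 (by decide)
    have n03 := ne 0 3 (by decide)
    have n12 := ne 1 2 (by decide)
    have n13 := ne 1 3 (by decide)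
    have n23 := ne 2 3 (by decide)
    refine ⟨σ, ?_⟩
    rcases h with h | ⟨h1, h2, h3, h4, h5, h6⟩ | ⟨h1, h2, h3, h4, h5, h6⟩
    · exact Or.inr (Or.inl fun i j hij => up _ _ (ne i j hij) (h i j hij))
    · exact Or.inr (Or.inr (Or.inl ⟨dn _ _ n01 h1, dn _ _ n02 h2, dn _ _ n03 h3,
        up _ _ n12 h4, up _ _ n13 h5, up _ _ n23 h6⟩))
    · exact Or.inr (Or.inr (Or.inr (Or.inl ⟨up _ _ n01 h1, up _ _ n23 h2, dn _ _ n02 h3,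
        dn _ _ n03 h4, dn _ _ n12 h5, dn _ _ n13 h6⟩)))
  · have hc1 : ∀ i j, i ≠ j → c i j ^ 2 = 1 := by
      intro i j hij
      obtain ⟨p, hp, e⟩ := hΔ i j hij
      rw [hzero] at e
      linarith
    have up : ∀ i j, i ≠ j → 0 < c i j → c i j = 1 := by
      intro i j hij h
      rcases sq_eq_sq_iff_eq_or_eq_neg.1 ((hc1 i j hij).trans (one_pow 2).symm) with h' | h' <;> linarith
    have dn : ∀ i j, i ≠ j → c i j < 0 → c i j = -1 := by
      intro i j hij h
      rcases sq_eq_sq_iff_eq_or_eq_neg.1 ((hc1 i j hij).trans (one_pow 2).symm) with h' | h' <;> linarith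
    obtain ⟨σ, h⟩ := sign_pattern hs (fun i j k hij hik hjk =>
      tri_pos (ht i j k hij hik hjk) (hc1 _ _ hij).ge (hc1 _ _ hik).ge (hc1 _ _ hjk).ge)
    have ne : ∀ i j : Fin 4, i ≠ j → σ i ≠ σ j := fun i j h => σ.injective.ne h
    have n01 := ne 0 1 (by decide)
    have n02 := ne 0 2 (by decide)
    have n03 := ne 0 3 (by decide)
    have n12 := ne 1 2 (by decide)
    have n13 := ne 1 3 (by decide)
    have n23 := ne 2 3 (by decide)
    refine ⟨σ, ?_⟩
    rcases h with h | ⟨h1, h2, h3, h4, h5, h6⟩ | ⟨h1, h2, h3, h4, h5, h6⟩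
    · exact Or.inr (Or.inr (Or.inr (Or.inr (Or.inl
        fun i j hij => up _ _ (ne i j hij) (h i j hij)))))
    · exact Or.inr (Or.inr (Or.inr (Or.inr (Or.inr (Or.inl
        ⟨dn _ _ n01 h1, dn _ _ n02 h2, dn _ _ n03 h3,
        up _ _ n12 h4, up _ _ n13 h5, up _ _ n23 h6⟩)))))
    · exact Or.inr (Or.inr (Or.inr (Or.inr (Or.inr (Or.inr
        ⟨up _ _ n01 h1, up _ _ n23 h2, dn _ _ n02 h3,
        dn _ _ n03 h4, dn _ _ n12 h5, dn _ _ n13 h6⟩)))))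
  · refine ⟨1, Or.inl ?_⟩
    intro i j hij
    obtain ⟨p, hp, e⟩ := hΔ i j hij
    have : c i j ^ 2 < 1 := by nlinarith [mul_pos hp hpos]
    exact abs_lt.1 ((sq_lt_one_iff_abs_lt_one _).1 this)
end
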